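/- Let P be a d-polytope with exactly 2d vertices whose vertex set can be partitioned into d pairs {u₁,v₁}, …, {u_d,v_d} such that each segment [u_i, v_i] is an inner diagonal of P. Then every proper face of P contains at most one vertex from each pair, and P is combinatorially equivalent to the d-dimensional crosspolytope conv{±e₁, …, ±e_d}. -/

import Mathlib

open scoped RealInnerProductSpace

noncomputable section

/-- We work in `ℝ^d`, modelled as Euclidean space. -/
abbrev Euc (d : ℕ) := EuclideanSpace ℝ (Fin d)

/-- `P` is a polytope: the convex hull of a finite set of points. -/
def IsPolytope {d : ℕ} (P : Set (Euc d)) : Prop :=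
  ∃ V : Set (Euc d), V.Finite ∧ P = convexHull ℝ V

/-- `P` is a `d`-polytope in `ℝ^d`: a polytope whose affine span is all of `ℝ^d`. -/
def IsDPolytope {d : ℕ} (P : Set (Euc d)) : Prop :=
  IsPolytope P ∧ affineSpan ℝ P = ⊤

/-- The vertices of a polytope are its extreme points. -/
def verts {d : ℕ} (P : Set (Euc d)) : Set (Euc d) :=
  Set.extremePoints ℝ P

/-- `[u,v]` is an inner diagonal of `P`: `u`, `v` are distinct vertices and the
relative interior of the segment (the open segment) meets the interior of `P`. -/
def InnerDiagonal {d : ℕ} (P : Set (Euc d)) (u v : Euc d) : Prop :=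
  u ∈ verts P ∧ v ∈ verts P ∧ u ≠ v ∧ (openSegment ℝ u v ∩ interior P).Nonempty

/-- `P` is illuminated: every vertex lies on an inner diagonal. -/
def Illuminated {d : ℕ} (P : Set (Euc d)) : Prop :=
  ∀ v ∈ verts P, ∃ u, InnerDiagonal P u v

/-- A set `U` of vertices illuminates itself if every `v ∈ U` lies on an inner
diagonal `[u,v]` with `u ∈ U`. -/
def IlluminatesItself {d : ℕ} (P : Set (Euc d)) (U : Set (Euc d)) : Prop :=
  ∀ v ∈ U, ∃ u ∈ U, InnerDiagonal P u v

/-- A set `W` of vertices lies opposite the vertex `v ∉ W` if `[v,w]` is an inner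
diagonal for all `w ∈ W`, and the remaining vertices illuminate themselves. -/
def LiesOpposite {d : ℕ} (P : Set (Euc d)) (W : Set (Euc d)) (v : Euc d) : Prop :=
  v ∈ verts P ∧ W ⊆ verts P ∧ v ∉ W ∧ (∀ w ∈ W, InnerDiagonal P v w) ∧
    IlluminatesItself P (verts P \ (W ∪ {v}))

/-- `Γ(P)`: the maximum cardinality of a set lying opposite some vertex (`0` if none). -/
def Gamma {d : ℕ} (P : Set (Euc d)) : ℕ :=
  sSup {n : ℕ | ∃ W v, LiesOpposite P W v ∧ W.ncard = n}

/-- `p(d) = ⌈(√(4d+1) - 1)/2⌉`. -/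
def pf (d : ℕ) : ℕ := ⌈(Real.sqrt (4 * d + 1) - 1) / 2⌉₊

/-- `M(d) = min {2d, d + p(d) + ⌈d/p(d)⌉ + 1}`. -/
def Mf (d : ℕ) : ℕ := min (2 * d) (d + pf d + ⌈(d : ℝ) / (pf d : ℝ)⌉₊ + 1)

/-- A Mani `d`-polytope: an illuminated `d`-polytope with exactly `M(d)` vertices. -/
def IsManiPolytope {d : ℕ} (P : Set (Euc d)) : Prop :=
  IsDPolytope P ∧ Illuminated P ∧ (verts P).ncard = Mf d

/-- A facet of a `d`-polytope: an exposed face of dimension `d - 1`. -/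
def IsFacetOf {d : ℕ} (P F : Set (Euc d)) : Prop :=
  IsExposed ℝ P F ∧ Module.finrank ℝ (affineSpan ℝ F).direction = d - 1

/-- `S` is the vertex set of an (exposed) face of `P`. -/
def IsFaceVertexSet {d : ℕ} (P S : Set (Euc d)) : Prop :=
  ∃ F : Set (Euc d), IsExposed ℝ P F ∧ S = verts P ∩ F

/-- Combinatorial equivalence: a bijection of the vertex sets carrying vertex sets
of faces to vertex sets of faces in both directions. -/
def CombEquiv {d : ℕ} (P Q : Set (Euc d)) : Prop :=
  ∃ f : Euc d → Euc d, Set.BijOn f (verts P) (verts Q) ∧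
    ∀ S ⊆ verts P, (IsFaceVertexSet P S ↔ IsFaceVertexSet Q (f '' S))

/-- The `d`-dimensional crosspolytope `conv {±e₁, …, ±e_d}`. -/
def crossPolytope (d : ℕ) : Set (Euc d) :=
  convexHull ℝ
    {x | ∃ i : Fin d, x = EuclideanSpace.single i 1 ∨ x = -EuclideanSpace.single i 1}

/-- `{u, v}` is the vertex set of an edge (a `1`-dimensional exposed face) of `P`. -/
def IsEdgeVertexSet {d : ℕ} (P : Set (Euc d)) (u v : Euc d) : Prop :=
  ∃ F : Set (Euc d), IsExposed ℝ P F ∧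
    Module.finrank ℝ (affineSpan ℝ F).direction = 1 ∧ Set.extremePoints ℝ F = {u, v}

/-!
A face of `P` is described by an affine functional that is nonpositive on `P`, so the faces of `P`
are read off from the cone of such functionals, a cone in dimension `d + 1`. An inner diagonal
`[uᵢ, vᵢ]` says that a nonzero element of this cone does not vanish at both `uᵢ` and `vᵢ`.

For each `i` prescribe the ratio of the values at `uᵢ` and `vᵢ`. These `d` linear equations have a
nonzero solution in the cone: this holds for one choice of ratios, and it persists when one ratio
changes. Indeed, move from the known solution in the direction of a suitably signed solution for
the new ratios. Along this ray the two values in each pair have the same sign, so the cone can only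
be left at a point where both values of some pair vanish. There is no such point, hence the
direction itself lies in the cone. With ratios `0 : 1`, `1 : 0` and `1 : 1` one obtains a
functional vanishing exactly on any prescribed set of vertices without a pair.
-/

theorem exists_ne_zero_forall_eq_zero {𝕜 A ι : Type*} [Field 𝕜] [AddCommGroup A] [Module 𝕜 A]
    [FiniteDimensional 𝕜 A] [Fintype ι] (r : ι → Module.Dual 𝕜 A)
    (hcard : Fintype.card ι < Module.finrank 𝕜 A) :
    ∃ x, x ≠ 0 ∧ ∀ i, r i x = 0 := by
  have hker : (LinearMap.pi r).ker ≠ ⊥ :=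
    LinearMap.ker_ne_bot_of_finrank_lt (by rwa [Module.finrank_fintype_fun_eq_card])
  obtain ⟨x, hx, hx0⟩ := Submodule.exists_mem_ne_zero_of_ne_bot hker
  exact ⟨x, hx0, fun i => congrFun (LinearMap.mem_ker.1 hx) i⟩

section PairedCone

variable {𝕜 A ι : Type*} [Field 𝕜] [LinearOrder 𝕜] [IsStrictOrderedRing 𝕜]
  [AddCommGroup A] [Module 𝕜 A] {p q r r' : ι → Module.Dual 𝕜 A} {a x : A}

/-- The polyhedral cone cut out by a family of pairs of linear inequalities `p i ≤ 0`, `q i ≤ 0`. -/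
def pairedCone (p q : ι → Module.Dual 𝕜 A) : Set A :=
  {a | ∀ i, p i a ≤ 0 ∧ q i a ≤ 0}

/-- The two hyperplanes of each pair meet the cone `pairedCone p q` only at its apex. -/
def IsSeparated (p q : ι → Module.Dual 𝕜 A) : Prop :=
  ∀ a ∈ pairedCone p q, ∀ i, p i a = 0 → q i a = 0 → a = 0

/-- On the hyperplane `r = 0` the functionals `p` and `q` have the same weak sign. The examples of
interest are the equations `α • p = β • q` prescribing the ratio of `p` and `q`. -/
def IsCoherent (r p q : Module.Dual 𝕜 A) : Prop :=
  ∀ a, r a = 0 → 0 ≤ p a * q a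

theorem isCoherent_smul_sub_smul (p q : Module.Dual 𝕜 A) {α β : 𝕜} (hαβ : 0 ≤ α * β)
    (hne : α ≠ 0 ∨ β ≠ 0) : IsCoherent (α • p - β • q) p q := by
  intro a ha
  have heq : α * p a = β * q a := by simpa [sub_eq_zero] using ha
  rcases hne with hα | hβ
  · refine nonneg_of_mul_nonneg_right ?_ (sq_pos_of_ne_zero hα)
    calc 0 ≤ α * β * q a ^ 2 := mul_nonneg hαβ (sq_nonneg _)
      _ = α ^ 2 * (p a * q a) := by linear_combination -α * q a * heq
  · refine nonneg_of_mul_nonneg_right ?_ (sq_pos_of_ne_zero hβ)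
    calc 0 ≤ α * β * p a ^ 2 := mul_nonneg hαβ (sq_nonneg _)
      _ = β ^ 2 * (p a * q a) := by linear_combination β * p a * heq

theorem mem_pairedCone_of_add_nonpos (hmul : ∀ i, 0 ≤ p i a * q i a)
    (hadd : ∀ i, p i a + q i a ≤ 0) : a ∈ pairedCone p q := by
  intro i
  rcases mul_nonneg_iff.1 (hmul i) with h | h
  · constructor <;> linarith [hadd i]
  · exact h

theorem IsSeparated.add_neg (hsep : IsSeparated p q) (ha : a ∈ pairedCone p q) (ha0 : a ≠ 0)
    (i : ι) : p i a + q i a < 0 := by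
  obtain ⟨hp, hq⟩ := ha i
  refine (add_nonpos hp hq).lt_of_ne fun h => ha0 (hsep a ha i ?_ ?_) <;> linarith

/- Otherwise some sums `p i + q i` become positive along the ray; at the first parameter where one
of them vanishes, the ray is still in the cone and both functionals of that pair vanish. -/
theorem IsSeparated.mem_pairedCone_of_ray [Finite ι] (hsep : IsSeparated p q)
    (ha : a ∈ pairedCone p q) (hx : ∀ i, 0 ≤ p i x * q i x)
    (hray : ∀ t : 𝕜, 0 ≤ t → ∀ i, 0 ≤ p i (a + t • x) * q i (a + t • x))
    (hne : ∀ t : 𝕜, 0 ≤ t → a + t • x ≠ 0) : x ∈ pairedCone p q := by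
  refine mem_pairedCone_of_add_nonpos hx ?_
  by_contra! hpos
  obtain ⟨i, hi, hmin⟩ := Set.exists_min_image {i | 0 < p i x + q i x}
    (fun i => -(p i a + q i a) / (p i x + q i x)) (Set.toFinite _) hpos
  have hadd_a (k : ι) : p k a + q k a ≤ 0 := add_nonpos (ha k).1 (ha k).2
  set t := -(p i a + q i a) / (p i x + q i x) with ht
  have ht0 : 0 ≤ t := div_nonneg (neg_nonneg.2 (hadd_a i)) hi.le
  have hadd (k : ι) :
      p k (a + t • x) + q k (a + t • x) = p k a + q k a + t * (p k x + q k x) := by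
    simp only [map_add, map_smul, smul_eq_mul]
    ring
  have hmem : a + t • x ∈ pairedCone p q := by
    refine mem_pairedCone_of_add_nonpos (hray t ht0) fun k => ?_
    rw [hadd]
    rcases lt_or_ge 0 (p k x + q k x) with hk | hk
    · linarith [(le_div_iff₀ hk).1 (hmin k hk)]
    · linarith [hadd_a k, mul_nonpos_of_nonneg_of_nonpos ht0 hk]
  have hzero : p i (a + t • x) + q i (a + t • x) = 0 := by
    rw [hadd, ht, div_mul_cancel₀ _ hi.ne', add_neg_cancel]
  exact (hsep.add_neg hmem (hne t ht0) i).ne hzero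

section FiniteDimensional

variable [Fintype ι] [FiniteDimensional 𝕜 A]

theorem IsSeparated.exists_forall_eq_zero_of_forall_ne (hsep : IsSeparated p q)
    (hcard : Fintype.card ι < Module.finrank 𝕜 A) (hr : ∀ i, IsCoherent (r i) (p i) (q i))
    (j : ι) (ha : a ∈ pairedCone p q) (ha0 : a ≠ 0) (har : ∀ i ≠ j, r i a = 0) :
    ∃ b ∈ pairedCone p q, b ≠ 0 ∧ ∀ i, r i b = 0 := by
  obtain ⟨x, hx0, hxr, hpx, hqx⟩ :
      ∃ x, x ≠ 0 ∧ (∀ i, r i x = 0) ∧ p j x ≤ 0 ∧ q j x ≤ 0 := by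
    obtain ⟨x, hx0, hxr⟩ := exists_ne_zero_forall_eq_zero r hcard
    rcases mul_nonneg_iff.1 (hr j x (hxr j)) with ⟨hp, hq⟩ | hpq
    · exact ⟨-x, neg_ne_zero.2 hx0, by simpa using hxr, by simpa using hp, by simpa using hq⟩
    · exact ⟨x, hx0, hxr, hpq⟩
  refine ⟨x, ?_, hx0, hxr⟩
  refine hsep.mem_pairedCone_of_ray ha (fun i => hr i x (hxr i)) (fun t ht i => ?_)
    fun t ht hzero => ?_
  · by_cases hij : i = j
    · subst hij
      simp only [map_add, map_smul, smul_eq_mul]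
      exact mul_nonneg_of_nonpos_of_nonpos
        (add_nonpos (ha i).1 (mul_nonpos_of_nonneg_of_nonpos ht hpx))
        (add_nonpos (ha i).2 (mul_nonpos_of_nonneg_of_nonpos ht hqx))
    · exact hr i _ (by simp [har i hij, hxr i])
  · have hpj : p j a + t * p j x = 0 := by simpa using congrArg (p j) hzero
    have hqj : q j a + t * q j x = 0 := by simpa using congrArg (q j) hzero
    linarith [hsep.add_neg ha ha0 j, mul_nonpos_of_nonneg_of_nonpos ht hpx,
      mul_nonpos_of_nonneg_of_nonpos ht hqx]

theorem IsSeparated.exists_forall_eq_zero (hsep : IsSeparated p q)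
    (hcard : Fintype.card ι < Module.finrank 𝕜 A) (hr : ∀ i, IsCoherent (r i) (p i) (q i))
    (hr' : ∀ i, IsCoherent (r' i) (p i) (q i))
    (ha : a ∈ pairedCone p q) (ha0 : a ≠ 0) (har : ∀ i, r i a = 0) :
    ∃ b ∈ pairedCone p q, b ≠ 0 ∧ ∀ i, r' i b = 0 := by
  classical
  suffices h : ∀ s : Finset ι, ∃ b ∈ pairedCone p q, b ≠ 0 ∧ ∀ i, s.piecewise r' r i b = 0 by
    simpa using h Finset.univ
  intro s
  induction s using Finset.induction_on with
  | empty => exact ⟨a, ha, ha0, by simpa using har⟩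
  | insert j s _ ih =>
    obtain ⟨b, hb, hb0, hbr⟩ := ih
    refine hsep.exists_forall_eq_zero_of_forall_ne hcard (fun i => ?_) j hb hb0 fun i hij => ?_
    · exact Finset.piecewise_cases _ r' r (fun f => IsCoherent f (p i) (q i)) (hr' i) (hr i)
    · rw [Finset.piecewise_insert_of_ne _ _ _ hij]
      exact hbr i

theorem IsSeparated.exists_eq_zero_iff (hsep : IsSeparated p q)
    (hcard : Fintype.card ι < Module.finrank 𝕜 A) (ha : a ∈ pairedCone p q) (ha0 : a ≠ 0)
    {I J : Set ι} (hIJ : Disjoint I J) :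
    ∃ b ∈ pairedCone p q, (∀ i, p i b = 0 ↔ i ∈ I) ∧ ∀ i, q i b = 0 ↔ i ∈ J := by
  classical
  let α (i : ι) : 𝕜 := if i ∈ J then 0 else 1
  let β (i : ι) : 𝕜 := if i ∈ I then 0 else 1
  have hcoh_a (i : ι) : IsCoherent (q i a • p i - p i a • q i) (p i) (q i) := by
    refine isCoherent_smul_sub_smul _ _ (mul_nonneg_of_nonpos_of_nonpos (ha i).2 (ha i).1) ?_
    by_contra! h
    exact ha0 (hsep a ha i h.2 h.1)
  have hcoh (i : ι) : IsCoherent (α i • p i - β i • q i) (p i) (q i) := by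
    have hα : 0 ≤ α i := by simp only [α]; positivity
    have hβ : 0 ≤ β i := by simp only [β]; positivity
    refine isCoherent_smul_sub_smul _ _ (mul_nonneg hα hβ) ?_
    by_cases hi : i ∈ I
    · exact .inl (by simp [α, hIJ.notMem_of_mem_left hi])
    · exact .inr (by simp [β, hi])
  obtain ⟨b, hb, hb0, hbr⟩ :=
    hsep.exists_forall_eq_zero hcard hcoh_a hcoh ha ha0 fun i => by simp [mul_comm]
  have hratio (i : ι) : α i * p i b = β i * q i b := by simpa [sub_eq_zero] using hbr i
  refine ⟨b, hb, fun i => ⟨fun hp => ?_, fun hi => ?_⟩, fun i => ⟨fun hq => ?_, fun hi => ?_⟩⟩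
  · by_contra hi
    exact hb0 (hsep b hb i hp (by simpa [hp, β, hi] using (hratio i).symm))
  · simpa [α, β, hi, hIJ.notMem_of_mem_left hi] using hratio i
  · by_contra hi
    exact hb0 (hsep b hb i (by simpa [hq, α, hi] using hratio i) hq)
  · simpa [α, β, hi, hIJ.notMem_of_mem_right hi] using (hratio i).symm

end FiniteDimensional

end PairedCone

section AffineFunctional

variable {E : Type*} [NormedAddCommGroup E] [NormedSpace ℝ E]

theorem eq_zero_of_isMaxOn_of_mem_interior {P : Set E} {z : E} {g : StrongDual ℝ E}
    (hmax : IsMaxOn g P z) (hz : z ∈ interior P) : g = 0 :=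
  (hmax.isLocalMax (mem_interior_iff_mem_nhds.1 hz)).hasFDerivAt_eq_zero g.hasFDerivAt

/-- Evaluation at `x` of affine functionals, where `(g, c)` encodes the functional `y ↦ g y + c`. -/
def affineEval (x : E) : Module.Dual ℝ (StrongDual ℝ E × ℝ) :=
  (ContinuousLinearMap.apply ℝ ℝ x : StrongDual ℝ E →ₗ[ℝ] ℝ).coprod LinearMap.id

@[simp]
theorem affineEval_apply (x : E) (a : StrongDual ℝ E × ℝ) : affineEval x a = a.1 x + a.2 :=
  rfl

theorem finrank_strongDual [FiniteDimensional ℝ E] :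
    Module.finrank ℝ (StrongDual ℝ E) = Module.finrank ℝ E :=
  (LinearMap.toContinuousLinearMap (𝕜 := ℝ) (E := E) (F' := ℝ)).finrank_eq.symm.trans
    Subspace.dual_finrank_eq

end AffineFunctional

section Polytope

variable {d : ℕ} {P Q S : Set (Euc d)} {u v u' v' : Fin d → Euc d}

theorem IsPolytope.convexHull_verts (hP : IsPolytope P) : convexHull ℝ (verts P) = P := by
  obtain ⟨V, hV, rfl⟩ := hP
  have hfin : (verts (convexHull ℝ V)).Finite := hV.subset extremePoints_convexHull_subset
  rw [← (hfin.isClosed_convexHull ℝ).closure_eq]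
  exact closure_convexHull_extremePoints (hV.isCompact_convexHull ℝ) (convex_convexHull ℝ V)

theorem IsPolytope.le_of_forall_verts_le (hP : IsPolytope P) {g : StrongDual ℝ (Euc d)} {c : ℝ}
    (h : ∀ x ∈ verts P, g x ≤ c) {y : Euc d} (hy : y ∈ P) : g y ≤ c := by
  rw [← hP.convexHull_verts] at hy
  exact convexHull_min h (convex_halfSpace_le g.toLinearMap.isLinear c) hy

theorem InnerDiagonal.eq_zero_of_isMaxOn {x y : Euc d} (h : InnerDiagonal P x y)
    {g : StrongDual ℝ (Euc d)} (hmax : IsMaxOn g P x) (hxy : g x = g y) : g = 0 := by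
  obtain ⟨-, -, -, z, ⟨s, t, -, -, hst, rfl⟩, hz⟩ := h
  refine eq_zero_of_isMaxOn_of_mem_interior (fun w hw => ?_) hz
  have hgz : g (s • x + t • y) = g x := by
    simp only [map_add, map_smul, smul_eq_mul, ← hxy, ← add_mul, hst, one_mul]
  simpa [hgz] using hmax hw

theorem InnerDiagonal.not_mem_and_mem_of_isExposed {x y : Euc d} (h : InnerDiagonal P x y)
    {F : Set (Euc d)} (hF : IsExposed ℝ P F) (hne : F ≠ P) : ¬(x ∈ F ∧ y ∈ F) := by
  rintro ⟨hx, hy⟩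
  obtain ⟨g, rfl⟩ := hF ⟨x, hx⟩
  have hg : g = 0 := h.eq_zero_of_isMaxOn hx.2 (le_antisymm (hy.2 x hx.1) (hx.2 y hy.1))
  simp [hg] at hne

theorem isFaceVertexSet_of_supporting {g : StrongDual ℝ (Euc d)} {c : ℝ} (hS : S ⊆ verts P)
    (hle : ∀ y ∈ P, g y ≤ c) (heq : ∀ x ∈ verts P, g x = c ↔ x ∈ S) : IsFaceVertexSet P S := by
  rcases S.eq_empty_or_nonempty with rfl | ⟨x₀, hx₀⟩
  · exact ⟨∅, fun h => absurd rfl h.ne_empty, (Set.inter_empty _).symm⟩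
  · have hx₀c : g x₀ = c := (heq x₀ (hS hx₀)).2 hx₀
    refine ⟨g.toExposed P, ContinuousLinearMap.toExposed.isExposed, Set.ext fun x => ?_⟩
    constructor
    · intro hx
      exact ⟨hS hx, (hS hx).1, fun y hy => (hle y hy).trans_eq ((heq x (hS hx)).2 hx).symm⟩
    · rintro ⟨hx, -, hmax⟩
      exact (heq x hx).1 (le_antisymm (hle x hx.1) (hx₀c ▸ hmax x₀ (hS hx₀).1))

/-- The points `u i` and `v i` are pairwise distinct, they are all the vertices of `P`, and each
`[u i, v i]` is an inner diagonal of `P`. -/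
structure IsInnerDiagonalMatching (P : Set (Euc d)) (u v : Fin d → Euc d) : Prop where
  injective : Function.Injective (Sum.elim u v)
  verts_eq : verts P = Set.range u ∪ Set.range v
  innerDiagonal : ∀ i, InnerDiagonal P (u i) (v i)

namespace IsInnerDiagonalMatching

theorem verts_eq_range (h : IsInnerDiagonalMatching P u v) :
    verts P = Set.range (Sum.elim u v) := by
  rw [h.verts_eq, Set.Sum.elim_range]

theorem forall_mem_verts (h : IsInnerDiagonalMatching P u v) {p : Euc d → Prop} :
    (∀ x ∈ verts P, p x) ↔ ∀ i, p (u i) ∧ p (v i) := by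
  simp only [h.verts_eq_range, Set.forall_mem_range, Sum.forall, Sum.elim_inl, Sum.elim_inr,
    forall_and]

theorem le_neg_of_mem_pairedCone (h : IsInnerDiagonalMatching P u v) (hP : IsPolytope P)
    {g : StrongDual ℝ (Euc d)} {c : ℝ}
    (hgc : (g, c) ∈ pairedCone (fun i => affineEval (u i)) fun i => affineEval (v i))
    {y : Euc d} (hy : y ∈ P) : g y ≤ -c := by
  refine hP.le_of_forall_verts_le (h.forall_mem_verts.2 fun i => ?_) hy
  exact (hgc i).imp le_neg_iff_add_nonpos_right.2 le_neg_iff_add_nonpos_right.2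

theorem isSeparated (h : IsInnerDiagonalMatching P u v) (hP : IsPolytope P) :
    IsSeparated (fun i => affineEval (u i)) fun i => affineEval (v i) := by
  rintro ⟨g, c⟩ ha i (hu : g (u i) + c = 0) (hv : g (v i) + c = 0)
  have hg : g = 0 := by
    refine (h.innerDiagonal i).eq_zero_of_isMaxOn (fun y hy => ?_) (by linarith)
    simpa [eq_neg_of_add_eq_zero_left hu] using h.le_neg_of_mem_pairedCone hP ha hy
  subst hg
  simpa using hu

theorem isFaceVertexSet (h : IsInnerDiagonalMatching P u v) (hP : IsPolytope P)
    (hS : S ⊆ verts P) (hpair : ∀ i, ¬(u i ∈ S ∧ v i ∈ S)) : IsFaceVertexSet P S := by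
  have hcard : Fintype.card (Fin d) < Module.finrank ℝ (StrongDual ℝ (Euc d) × ℝ) := by
    simp [finrank_strongDual]
  have hdisj : Disjoint {i | u i ∈ S} {i | v i ∈ S} :=
    Set.disjoint_left.2 fun i hu hv => hpair i ⟨hu, hv⟩
  obtain ⟨⟨g, c⟩, hb, hu, hv⟩ := (h.isSeparated hP).exists_eq_zero_iff hcard
    (a := (0, -1)) (fun i => by simp) (by simp) hdisj
  refine isFaceVertexSet_of_supporting (g := g) (c := -c) hS
    (fun y => h.le_neg_of_mem_pairedCone hP hb) ?_
  simp only [← add_eq_zero_iff_eq_neg]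
  exact h.forall_mem_verts.2 fun i => ⟨hu i, hv i⟩

theorem isFaceVertexSet_iff (h : IsInnerDiagonalMatching P u v) (hP : IsPolytope P)
    (hS : S ⊆ verts P) :
    IsFaceVertexSet P S ↔ S = verts P ∨ ∀ i, ¬(u i ∈ S ∧ v i ∈ S) := by
  have hverts : verts P ∩ P = verts P := Set.inter_eq_left.2 extremePoints_subset
  constructor
  · rintro ⟨F, hF, rfl⟩
    by_cases hFP : F = P
    · exact .inl (by rw [hFP, hverts])
    · refine .inr fun i hi => ?_
      exact (h.innerDiagonal i).not_mem_and_mem_of_isExposed hF hFP (hi.imp And.right And.right)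
  · rintro (rfl | hpair)
    · exact ⟨P, .refl P, hverts.symm⟩
    · exact h.isFaceVertexSet hP hS hpair

theorem combEquiv (hu : IsInnerDiagonalMatching P u v) (hu' : IsInnerDiagonalMatching Q u' v')
    (hP : IsPolytope P) (hQ : IsPolytope Q) : CombEquiv P Q := by
  let f : Euc d → Euc d := Function.extend (Sum.elim u v) (Sum.elim u' v') id
  have hf : f ∘ Sum.elim u v = Sum.elim u' v' := Function.extend_comp hu.injective _ _
  have hinj : Set.InjOn f (verts P) := by
    rw [hu.verts_eq_range]
    exact Function.Injective.injOn_range (hf ▸ hu'.injective)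
  have himage : f '' verts P = verts Q := by
    rw [hu.verts_eq_range, hu'.verts_eq_range, ← Set.range_comp, hf]
  refine ⟨f, himage ▸ hinj.bijOn_image, fun S hS => ?_⟩
  have hmem {x : Euc d} (hx : x ∈ verts P) : f x ∈ f '' S ↔ x ∈ S := hinj.mem_image_iff hS hx
  have hmem_u (i : Fin d) : u' i ∈ f '' S ↔ u i ∈ S := by
    rw [← hmem (hu.innerDiagonal i).1]
    exact iff_of_eq (congrArg (· ∈ f '' S) (congrFun hf (.inl i)).symm)
  have hmem_v (i : Fin d) : v' i ∈ f '' S ↔ v i ∈ S := by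
    rw [← hmem (hu.innerDiagonal i).2.1]
    exact iff_of_eq (congrArg (· ∈ f '' S) (congrFun hf (.inr i)).symm)
  rw [hu.isFaceVertexSet_iff hP hS, hu'.isFaceVertexSet_iff hQ (himage ▸ Set.image_mono hS),
    ← himage, hinj.image_eq_image_iff hS subset_rfl]
  simp only [hmem_u, hmem_v]

end IsInnerDiagonalMatching

end Polytope

section CrossPolytope

variable {d : ℕ}

theorem crossPolytope_eq_convexHull_range (d : ℕ) : crossPolytope d = convexHull ℝ
    (Set.range (fun i : Fin d => EuclideanSpace.single i (1 : ℝ)) ∪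
      Set.range fun i : Fin d => -EuclideanSpace.single i (1 : ℝ)) := by
  rw [crossPolytope]
  congr 1
  ext x
  simp [exists_or, eq_comm]

theorem isPolytope_crossPolytope (d : ℕ) : IsPolytope (crossPolytope d) :=
  ⟨_, (Set.finite_range _).union (Set.finite_range _), crossPolytope_eq_convexHull_range d⟩

theorem single_mem_crossPolytope (i : Fin d) :
    EuclideanSpace.single i (1 : ℝ) ∈ crossPolytope d :=
  subset_convexHull ℝ _ ⟨i, .inl rfl⟩

theorem neg_single_mem_crossPolytope (i : Fin d) :
    -EuclideanSpace.single i (1 : ℝ) ∈ crossPolytope d :=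
  subset_convexHull ℝ _ ⟨i, .inr rfl⟩

theorem crossPolytope_subset_closedBall (d : ℕ) :
    crossPolytope d ⊆ Metric.closedBall (0 : Euc d) 1 := by
  refine convexHull_min ?_ (convex_closedBall 0 1)
  rintro x ⟨i, rfl | rfl⟩ <;> simp

theorem mem_verts_crossPolytope_of_norm_eq_one {x : Euc d} (hx : x ∈ crossPolytope d)
    (hnorm : ‖x‖ = 1) : x ∈ verts (crossPolytope d) :=
  inter_extremePoints_subset_extremePoints_of_subset (crossPolytope_subset_closedBall d)
    ⟨hx, StrictConvexSpace.sphere_subset_extremePoints_closedBall 0 one_ne_zero (by simpa)⟩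

theorem verts_crossPolytope (d : ℕ) : verts (crossPolytope d) =
    Set.range (fun i : Fin d => EuclideanSpace.single i (1 : ℝ)) ∪
      Set.range fun i : Fin d => -EuclideanSpace.single i (1 : ℝ) := by
  apply Set.Subset.antisymm
  · rw [crossPolytope_eq_convexHull_range]
    exact extremePoints_convexHull_subset
  · rintro _ (⟨i, rfl⟩ | ⟨i, rfl⟩)
    · exact mem_verts_crossPolytope_of_norm_eq_one (single_mem_crossPolytope i) (by simp)
    · exact mem_verts_crossPolytope_of_norm_eq_one (neg_single_mem_crossPolytope i) (by simp)

theorem single_mem_crossPolytope_of_abs_le (i : Fin d) {c : ℝ} (hc : |c| ≤ 1) :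
    EuclideanSpace.single i c ∈ crossPolytope d := by
  obtain ⟨hlower, hupper⟩ := abs_le.1 hc
  have hcomb : EuclideanSpace.single i c = ((1 + c) / 2) • EuclideanSpace.single i (1 : ℝ) +
      ((1 - c) / 2) • -EuclideanSpace.single i (1 : ℝ) := by
    rw [smul_neg, ← sub_eq_add_neg, ← sub_smul, show (1 + c) / 2 - (1 - c) / 2 = c by ring]
    ext k
    simp
  rw [hcomb]
  exact convex_convexHull ℝ _ (single_mem_crossPolytope i) (neg_single_mem_crossPolytope i)
    (by linarith) (by linarith) (by ring)

theorem zero_mem_interior_crossPolytope [NeZero d] : (0 : Euc d) ∈ interior (crossPolytope d) := by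
  rw [mem_interior_iff_mem_nhds]
  have hsmall : ∀ᶠ x : Euc d in nhds 0, ∀ i, |d * x i| < 1 := by
    refine Filter.eventually_all.2 fun i => ?_
    have hcont : Continuous fun x : Euc d => |d * x i| := by fun_prop
    exact (hcont.tendsto 0).eventually_lt_const (by simp)
  filter_upwards [hsmall] with x hx
  have hd : (d : ℝ) ≠ 0 := NeZero.ne _
  have hsum : ∑ i, (d : ℝ)⁻¹ • EuclideanSpace.single i (d * x i) = x := by
    ext k
    simp [Pi.single_apply, hd]
  rw [← hsum]
  refine (convex_convexHull ℝ _).sum_mem (fun _ _ => by positivity) (by simp [hd]) fun i _ => ?_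
  exact single_mem_crossPolytope_of_abs_le i (hx i).le

theorem single_ne_neg_single (i j : Fin d) :
    EuclideanSpace.single i (1 : ℝ) ≠ -EuclideanSpace.single j 1 := by
  intro h
  have hi : (1 : ℝ) = -if i = j then 1 else 0 := by
    simpa using congrArg (fun x : Euc d => x i) h
  split_ifs at hi <;> norm_num at hi

theorem innerDiagonal_crossPolytope (i : Fin d) : InnerDiagonal (crossPolytope d)
    (EuclideanSpace.single i 1) (-EuclideanSpace.single i 1) := by
  have : NeZero d := ⟨(Fin.pos i).ne'⟩
  refine ⟨?_, ?_, single_ne_neg_single i i, 0, ?_, zero_mem_interior_crossPolytope⟩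
  · simp [verts_crossPolytope]
  · simp [verts_crossPolytope]
  · exact ⟨1 / 2, 1 / 2, by norm_num, by norm_num, by norm_num, by simp⟩

theorem isInnerDiagonalMatching_crossPolytope (d : ℕ) :
    IsInnerDiagonalMatching (crossPolytope d) (fun i => EuclideanSpace.single i 1)
      fun i => -EuclideanSpace.single i 1 where
  injective := by
    have hsingle : Function.Injective fun i : Fin d => EuclideanSpace.single i (1 : ℝ) :=
      EuclideanSpace.orthonormal_single.linearIndependent.injective
    exact hsingle.sumElim (neg_injective.comp hsingle) single_ne_neg_single
  verts_eq := verts_crossPolytope d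
  innerDiagonal := innerDiagonal_crossPolytope

end CrossPolytope

/-- If the `2d` vertices of a `d`-polytope `P` are partitioned
into `d` pairs `{uᵢ, vᵢ}`, each spanning an inner diagonal, then every proper face
of `P` contains at most one vertex from each pair, and `P` is combinatorially
equivalent to the `d`-dimensional crosspolytope. -/
theorem matched_polytope_is_crossPolytope {d : ℕ} (P : Set (Euc d))
    (hP : IsDPolytope P) (u v : Fin d → Euc d)
    (hinj : Function.Injective (Sum.elim u v : Fin d ⊕ Fin d → Euc d))
    (hverts : verts P = Set.range u ∪ Set.range v)
    (hcard : (verts P).ncard = 2 * d)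
    (hdiag : ∀ i : Fin d, InnerDiagonal P (u i) (v i)) :
    (∀ F : Set (Euc d), IsExposed ℝ P F → F ≠ P →
        ∀ i : Fin d, ¬ (u i ∈ F ∧ v i ∈ F)) ∧
      CombEquiv P (crossPolytope d) := by
  refine ⟨fun F hF hne i => (hdiag i).not_mem_and_mem_of_isExposed hF hne, ?_⟩
  have hmatching : IsInnerDiagonalMatching P u v := ⟨hinj, hverts, hdiag⟩
  exact hmatching.combEquiv (isInnerDiagonalMatching_crossPolytope d) hP.1
    (isPolytope_crossPolytope d)
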